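/- The ℓ-flag polynomial of the standard simplex Δ_{r-1} satisfies x_1 · f̃^ℓ_{Δ_{r-1}}(x_1,…,x_ℓ) = (x_1 + x_2 + ⋯ + x_ℓ + 1)^r − (x_2 + ⋯ + x_ℓ + 1)^r. -/

import Mathlib

open Classical MvPolynomial

/-!
A chain `T 0 ⊆ ⋯ ⊆ T (ℓ-1)` of subsets of `α`, empty ones allowed, is the same as a function
`α → {0, …, ℓ-1, ∞}` recording where each element first appears. Expanding
`(x₁ + ⋯ + x_ℓ + 1) ^ |α|` over such functions, the term `1` standing for `∞`, therefore gives the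
sum over all chains of `∏ i, x_i ^ |T i \ T (i-1)|`. Setting `x₁ = 0` keeps exactly the chains with
`T 0 = ∅`, so the difference of the two powers is the sum over the chains of nonempty sets, in
which the exponent `|T 0|` of `x₁` is one more than the dimension of the face `T 0`.
-/

section

open Finset

variable {ι α M R : Type*}

section FirstIndex

variable [LinearOrder ι] [Fintype ι] [DecidableEq α]

/-- The first index at which `a` belongs to the family `T`, with `⊤` meaning that it never does.
On monotone families this is the bijection between chains of subsets of `α` and functions
`α → WithTop ι`. -/
def firstIndex (T : ι → Finset α) (a : α) : WithTop ι :=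
  ({i | a ∈ T i} : Finset ι).min

theorem firstIndex_le_coe_iff {T : ι → Finset α} (hT : Monotone T) {a : α} {i : ι} :
    firstIndex T a ≤ i ↔ a ∈ T i := by
  refine ⟨fun h ↦ ?_, fun h ↦ min_le (by simpa using h)⟩
  obtain ⟨m, hm, hmi⟩ := WithTop.le_coe_iff.1 h
  have ham : a ∈ T m := (mem_filter.1 (mem_of_min hm)).2
  exact hT hmi ham

variable [Fintype α]

theorem firstIndex_sublevel (c : α → WithTop ι) :
    firstIndex (fun i : ι ↦ ({a | c a ≤ i} : Finset α)) = c := by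
  funext a
  refine le_antisymm ?_ (Finset.le_min fun i hi ↦ by simpa using hi)
  cases h : c a with
  | top => exact le_top
  | coe m => exact min_le (by simp [h])

/-- The elements that enter the family `T` at the index `i`. For a chain this is the set
difference of `T i` and its predecessor, with no predecessor needed at the least index. -/
def layer (T : ι → Finset α) (i : ι) : Finset α :=
  {a | firstIndex T a = i}

theorem layer_bot [OrderBot ι] {T : ι → Finset α} (hT : Monotone T) : layer T ⊥ = T ⊥ := by
  ext a
  simp [layer, ← firstIndex_le_coe_iff hT]

theorem layer_of_covBy {T : ι → Finset α} (hT : Monotone T) {i j : ι} (hij : i ⋖ j) :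
    layer T j = T j \ T i := by
  ext a
  have hcov : (i : WithTop ι) ⋖ j := WithTop.coe_covBy_coe.2 hij
  simp only [layer, mem_filter_univ, mem_sdiff, ← firstIndex_le_coe_iff hT, not_le]
  exact ⟨fun h ↦ ⟨h.le, h ▸ hcov.lt⟩, fun ⟨hj, hi⟩ ↦ le_antisymm hj (hcov.ge_of_gt hi)⟩

end FirstIndex

section ChainSum

@[to_additive]
theorem prod_univ_withTop [CommMonoid M] [Fintype ι] (f : WithTop ι → M) :
    ∏ o, f o = f ⊤ * ∏ i : ι, f i :=
  Fintype.prod_option f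

variable [LinearOrder ι] [Fintype ι] [Fintype α] [DecidableEq α]

theorem prod_pow_card_layer [CommMonoid M] (x : ι → M) (T : ι → Finset α) :
    ∏ i, x i ^ #(layer T i) = ∏ a, (firstIndex T a).recTopCoe 1 x := by
  rw [← Fintype.prod_fiberwise' (firstIndex T) (WithTop.recTopCoe 1 x), prod_univ_withTop]
  simp [layer, Fintype.card_subtype]

variable [CommSemiring R] [DecidablePred fun T : ι → Finset α ↦ Monotone T]

theorem sum_prod_pow_card_layer (x : ι → R) :
    ∑ T : ι → Finset α with Monotone T, ∏ i, x i ^ #(layer T i) =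
      (∑ i, x i + 1) ^ Fintype.card α := by
  calc ∑ T : ι → Finset α with Monotone T, ∏ i, x i ^ #(layer T i)
    _ = ∑ c : α → WithTop ι, ∏ a, (c a).recTopCoe 1 x := by
      refine sum_nbij' firstIndex (fun c i ↦ {a | c a ≤ i}) ?_ ?_ ?_ ?_ ?_
      · simp
      · intro c _
        simp only [mem_filter_univ]
        exact fun i j hij a ↦ by simpa using (le_trans · (WithTop.coe_le_coe.2 hij))
      · intro T hT
        ext i a
        simp [firstIndex_le_coe_iff (mem_filter.1 hT).2]
      · exact fun c _ ↦ firstIndex_sublevel c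
      · exact fun T _ ↦ prod_pow_card_layer x T
    _ = ∏ _a : α, ∑ o : WithTop ι, o.recTopCoe 1 x := (Fintype.prod_sum _).symm
    _ = (∑ i, x i + 1) ^ Fintype.card α := by
      simp [sum_univ_withTop, add_comm]

variable [OrderBot ι]

theorem sum_prod_pow_card_layer_of_bot_eq_empty (x : ι → R) :
    ∑ T : ι → Finset α with Monotone T ∧ T ⊥ = ∅, ∏ i, x i ^ #(layer T i) =
      (∑ i with i ≠ ⊥, x i + 1) ^ Fintype.card α := by
  have hsum : ∑ i, Function.update x ⊥ 0 i = ∑ i with i ≠ ⊥, x i := by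
    rw [sum_update_of_mem (mem_univ ⊥), zero_add, filter_ne', sdiff_singleton_eq_erase]
  rw [← hsum, ← sum_prod_pow_card_layer, ← filter_filter, sum_filter]
  refine sum_congr rfl fun T hT ↦ ?_
  have hbot : layer T ⊥ = T ⊥ := layer_bot (mem_filter.1 hT).2
  split_ifs with hempty
  · refine prod_congr rfl fun i _ ↦ ?_
    obtain rfl | hi := eq_or_ne i ⊥
    · simp [hbot, hempty]
    · rw [Function.update_of_ne hi]
  · exact (prod_eq_zero (mem_univ ⊥) (by simp [hbot, hempty])).symm

theorem sum_prod_pow_card_layer_of_bot_nonempty_add (x : ι → R) :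
    ∑ T : ι → Finset α with Monotone T ∧ (T ⊥).Nonempty, ∏ i, x i ^ #(layer T i) +
        (∑ i with i ≠ ⊥, x i + 1) ^ Fintype.card α =
      (∑ i, x i + 1) ^ Fintype.card α := by
  rw [← sum_prod_pow_card_layer_of_bot_eq_empty, ← sum_prod_pow_card_layer,
    ← sum_filter_add_sum_filter_not (filter Monotone univ) (fun T ↦ (T ⊥).Nonempty)]
  simp only [filter_filter, not_nonempty_iff_eq_empty]

end ChainSum

section FlagPolynomial

variable [Fintype α] [DecidableEq α] [CommSemiring R]

theorem mul_prod_pow_card_sub_card_pred {n : ℕ} (x : Fin (n + 1) → R)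
    {T : Fin (n + 1) → Finset α} (hT : Monotone T) (hne : (T 0).Nonempty) :
    x 0 * ∏ i : Fin (n + 1), x i ^ (#(T i) - if i.val = 0 then 1 else
        #(T ⟨i.val - 1, (Nat.sub_le _ _).trans_lt i.isLt⟩)) =
      ∏ i, x i ^ #(layer T i) := by
  have hsucc (i : Fin n) : #(layer T i.succ) = #(T i.succ) - #(T i.castSucc) := by
    have hcov : i.castSucc ⋖ i.succ := Fin.covBy_iff.2 (Order.covBy_add_one i.val)
    rw [layer_of_covBy hT hcov, card_sdiff_of_subset (hT i.castSucc_le_succ)]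
  have hzero : layer T 0 = T 0 := layer_bot hT
  rw [Fin.prod_univ_succ, Fin.prod_univ_succ, ← mul_assoc, hzero]
  simp only [Fin.val_zero, if_true, ← pow_succ', Nat.sub_add_cancel hne.card_pos, hsucc]
  -- The index `i.succ.val - 1` is `i.castSucc` by definition.
  rfl

theorem stmt2_general {ℓ : ℕ} (hℓ : 1 ≤ ℓ) (x : Fin ℓ → R) :
    x ⟨0, hℓ⟩ *
        ∑ T : Fin ℓ → Finset α with
            (∀ i j : Fin ℓ, i ≤ j → T i ⊆ T j) ∧ ∀ i : Fin ℓ, (T i).Nonempty,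
          ∏ i : Fin ℓ, x i ^ (#(T i) - if i.val = 0 then 1 else
            #(T ⟨i.val - 1, (Nat.sub_le _ _).trans_lt i.isLt⟩)) +
        (∑ i : Fin ℓ with i.val ≠ 0, x i + 1) ^ Fintype.card α =
      (∑ i, x i + 1) ^ Fintype.card α := by
  obtain ⟨n, rfl⟩ := Nat.exists_eq_add_of_le' hℓ
  have hchain (T : Fin (n + 1) → Finset α) :
      ((∀ i j, i ≤ j → T i ⊆ T j) ∧ ∀ i, (T i).Nonempty) ↔ Monotone T ∧ (T ⊥).Nonempty :=
    and_congr_right fun hT ↦ ⟨fun h ↦ h ⊥, fun h i ↦ h.mono (hT ⊥ i bot_le)⟩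
  have hbot (i : Fin (n + 1)) : i.val ≠ 0 ↔ i ≠ ⊥ := Fin.val_ne_zero_iff
  rw [← sum_prod_pow_card_layer_of_bot_nonempty_add, mul_sum, filter_congr fun i _ ↦ hbot i]
  congr 1
  refine sum_congr (by ext T; simp only [mem_filter_univ, hchain]) fun T hT ↦ ?_
  obtain ⟨hmono, hne⟩ := (mem_filter.1 hT).2
  exact mul_prod_pow_card_sub_card_pred x hmono hne

end FlagPolynomial

end

/-- The `ℓ`-flag polynomial of the standard simplex `Δ_{r-1}` satisfies
`x₁ · f̃^ℓ_{Δ_{r-1}}(x₁,…,x_ℓ) = (x₁ + ⋯ + x_ℓ + 1)^r − (x₂ + ⋯ + x_ℓ + 1)^r`.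
Faces of `Δ_{r-1}` are nonempty subsets of `[r]`; a chain of faces
`T 0 ⊆ ⋯ ⊆ T (ℓ-1)` contributes the monomial
`∏ i, x_i ^ (dim (T i) - dim (T (i-1)))` where `dim` is `card - 1`
(with the convention that the exponent of the first variable is `dim (T 0)`). -/
theorem stmt2 (r ℓ : ℕ) (hℓ : 1 ≤ ℓ) :
    (MvPolynomial.X ⟨0, hℓ⟩ : MvPolynomial (Fin ℓ) ℤ) *
      ∑ T ∈ Finset.univ.filter (fun T : Fin ℓ → Finset (Fin r) =>
          (∀ i j : Fin ℓ, i ≤ j → T i ⊆ T j) ∧ ∀ i : Fin ℓ, (T i).Nonempty),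
        ∏ i : Fin ℓ,
          (MvPolynomial.X i : MvPolynomial (Fin ℓ) ℤ) ^
            ((T i).card -
              (if i.val = 0 then 1
               else (T ⟨i.val - 1, Nat.lt_of_le_of_lt (Nat.sub_le _ _) i.isLt⟩).card))
    = (∑ i : Fin ℓ, MvPolynomial.X i + 1) ^ r -
        (∑ i ∈ Finset.univ.filter (fun i : Fin ℓ => i.val ≠ 0), MvPolynomial.X i + 1) ^ r :=
  eq_sub_of_add_eq <| by simpa only [Fintype.card_fin] using stmt2_general (α := Fin r) hℓ X
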